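/- Let A be a finite alphabet with |A| ≥ 2. The diagonal action of G* on the product ∏_{a∈A} Ω^a is strongly proximal: for every Borel probability measure μ on ∏_{a∈A} Ω^a there exists a sequence g_k ∈ G* such that the pushforward measures g_k μ converge weak* to a point mass. -/

import Mathlib

open Filter MeasureTheory

/-- The group of self-homeomorphisms of a topological space,
with `(f * g) x = f (g x)`. -/
instance homeoGroup (X : Type*) [TopologicalSpace X] : Group (X ≃ₜ X) where
  mul f g := g.trans f
  one := Homeomorph.refl X
  inv := Homeomorph.symm
  mul_assoc f g h := Homeomorph.ext fun _ => rfl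
  one_mul f := Homeomorph.ext fun _ => rfl
  mul_one f := Homeomorph.ext fun _ => rfl
  inv_mul_cancel f := Homeomorph.ext f.symm_apply_apply

/-- The left shift `(σ x) m = x (m+1)` on `A^ℤ`, as a homeomorphism. -/
def shiftHomeo (A : Type*) [TopologicalSpace A] : (ℤ → A) ≃ₜ (ℤ → A) where
  toFun x := fun m => x (m + 1)
  invFun x := fun m => x (m - 1)
  left_inv x := funext fun m => by simp
  right_inv x := funext fun m => by simp
  continuous_toFun := continuous_pi fun m => continuous_apply (m + 1)
  continuous_invFun := continuous_pi fun m => continuous_apply (m - 1)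

/-- `Aut(A^ℤ)`: the group of homeomorphisms of `A^ℤ` commuting with the shift. -/
def ShiftAut (A : Type*) [TopologicalSpace A] : Subgroup ((ℤ → A) ≃ₜ (ℤ → A)) :=
  Subgroup.centralizer {shiftHomeo A}

/-- `Ω`: the space of one-sided configurations whose zeroth symbol differs from
the first. -/
def OmegaSet (A : Type*) : Set (ℕ → A) := {x | x 0 ≠ x 1}

/-- `Ω^a`: the elements of `Ω` whose zeroth symbol is `a`. -/
def OmegaA (A : Type*) (a : A) : Set (ℕ → A) := {x | x 0 = a ∧ x 0 ≠ x 1}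

/-- `φ : Ω → A^ℤ_*` prepends an infinite constant `x 0` prefix to `x`. -/
def phiMap (A : Type*) (x : ℕ → A) : ℤ → A :=
  fun m => if m ≤ 0 then x 0 else x m.toNat

/-- `ℓ(y)`: the last coordinate of the constant prefix of `y ∈ A^ℤ_*`. -/
noncomputable def ellVal (A : Type*) (y : ℤ → A) : ℤ :=
  sInf {m : ℤ | y m ≠ y (m + 1)}

/-- The action of `Aut(A^ℤ)` on `Ω`: `g • x = ψ (g (φ x))`, where
`ψ(y) = φ⁻¹(σ^{ℓ(y)} y)`, i.e. `(g • x) n = (g (φ x)) (ℓ (g (φ x)) + n)`. -/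
noncomputable def omegaAct (A : Type*) [TopologicalSpace A]
    (g : (ℤ → A) ≃ₜ (ℤ → A)) (x : ℕ → A) : ℕ → A :=
  fun n => g (phiMap A x) (ellVal A (g (phiMap A x)) + n)

/-- `G* = ∩_{a ∈ A} G^a`, where `G^a` is the set of automorphisms that
preserve `Ω^a` under the action on `Ω`. -/
def Gstar (A : Type*) [TopologicalSpace A] : Set ((ℤ → A) ≃ₜ (ℤ → A)) :=
  {g | g ∈ ShiftAut A ∧ ∀ a : A, omegaAct A g '' OmegaA A a = OmegaA A a}

/-- The product `∏_{a ∈ A} Ω^a`. -/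
abbrev ProdOmega (A : Type*) : Type _ := {z : A → ℕ → A // ∀ a : A, z a ∈ OmegaA A a}

/-- The diagonal action of `G*` on `∏_{a ∈ A} Ω^a`. -/
noncomputable def diagAct (A : Type*) [TopologicalSpace A]
    (g : (ℤ → A) ≃ₜ (ℤ → A)) (hg : g ∈ Gstar A) (z : ProdOmega A) : ProdOmega A :=
  ⟨fun a => omegaAct A g (z.1 a), fun a => by
    have h := hg.2 a
    rw [← h]
    exact Set.mem_image_of_mem _ (z.2 a)⟩

/-!
Given a letter `a` and a word `s` of length `k` with `s₀ ≠ a`, exchange the middle blocks of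
`aᵏ · aᵏ · c` and `aᵏ · s · c` wherever such a pattern occurs with `c₀ ≠ a` and `c ≠ s`. A middle
block never meets another occurrence, so this *marker automorphism* is an involution. On `Ω^a` it
inserts `s` right after the initial `a`, except where `s` already follows; on `Ω^b` with `b ≠ a` it
leaves the coordinates `0, …, k` alone.

Fix a target `z` and a precision `n`. With `x = z a`, the words `x₁ … xₙ₊₁ aʲ x₁`, `j = 0, 1, …`,
are pairwise incompatible, so one of them is followed by only a small mass, and its marker
automorphism moves the `a`-coordinate of the remaining points into the `n`-cylinder of `x` without
spoiling the other coordinates. Treating the letters one after the other moves all but a small mass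
close to `z`; Borel–Cantelli and dominated convergence then give weak* convergence to the point
mass at `z`.
-/

section Words

variable {A : Type*}

/-- The word `w 0 … w (k - 1)` occurs in the configuration `y` at position `p`. -/
def HasWordAt (w : ℕ → A) (k : ℕ) (y : ℤ → A) (p : ℤ) : Prop :=
  ∀ i < k, y (p + (i : ℤ)) = w i

lemma HasWordAt.apply_eq {w : ℕ → A} {k : ℕ} {y : ℤ → A} {p m : ℤ} (h : HasWordAt w k y p)
    (hpm : p ≤ m) (hmk : m < p + k) : y m = w (m - p).toNat := by
  rw [← h (m - p).toNat (by omega)]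
  congr 1
  omega

lemma HasWordAt.congr {w : ℕ → A} {k : ℕ} {x y : ℤ → A} {p q : ℤ}
    (hxy : ∀ i < k, x (p + (i : ℤ)) = y (q + (i : ℤ))) (h : HasWordAt w k x p) :
    HasWordAt w k y q :=
  fun i hi => (hxy i hi).symm.trans (h i hi)

end Words

/-- The data of a marker automorphism: a letter `a` and a word `s` of length `k` not starting
with `a`. The word is extended arbitrarily to an infinite one. -/
structure Marker (A : Type*) where
  letter : A
  word : ℕ → A
  length : ℕ
  word_zero_ne : word 0 ≠ letter

namespace Marker

variable {A : Type*} (M : Marker A)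

/-- The pattern `aᵏ · w · c` with `w ∈ {aᵏ, s}`, `c₀ ≠ a` and `c ≠ s` occurs in `x`, its middle
block `w` starting at position `p`. -/
structure OccursAt (x : ℤ → A) (p : ℤ) : Prop where
  left : HasWordAt (fun _ => M.letter) M.length x (p - M.length)
  middle : HasWordAt (fun _ => M.letter) M.length x p ∨ HasWordAt M.word M.length x p
  right_start_ne : x (p + M.length) ≠ M.letter
  right_ne : ¬ HasWordAt M.word M.length x (p + M.length)

open Classical in
/-- Exchange `aᵏ` and `s` in the middle block of every occurrence of the pattern. -/
noncomputable def swap (x : ℤ → A) (m : ℤ) : A :=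
  if h : ∃ p, M.OccursAt x p ∧ p ≤ m ∧ m < p + M.length then
    if x h.choose = M.letter then M.word (m - h.choose).toNat else M.letter
  else x m

variable {M}

lemma OccursAt.length_pos {x : ℤ → A} {p : ℤ} (h : M.OccursAt x p) : 0 < M.length := by
  by_contra hk
  exact h.right_ne fun i hi => absurd hi (by omega)

lemma OccursAt.middle_cases {x : ℤ → A} {p : ℤ} (h : M.OccursAt x p) :
    (x p = M.letter ∧ HasWordAt (fun _ => M.letter) M.length x p) ∨
      (x p ≠ M.letter ∧ HasWordAt M.word M.length x p) := by
  have hk := h.length_pos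
  refine h.middle.imp (fun hw => ⟨hw.apply_eq le_rfl (by omega), hw⟩) fun hw => ⟨?_, hw⟩
  rw [hw.apply_eq le_rfl (by omega), sub_self]
  exact M.word_zero_ne

lemma OccursAt.add_two_mul_length_le {x : ℤ → A} {p p' : ℤ} (h : M.OccursAt x p)
    (h' : M.OccursAt x p') (hlt : p < p') : p + 2 * M.length ≤ p' := by
  by_contra! hclose
  have hle : p' ≤ p + M.length := by
    by_contra! hfar
    exact h.right_start_ne (h'.left.apply_eq (by omega) (by omega))
  rcases h.middle_cases with ⟨-, hconst⟩ | ⟨hp, -⟩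
  · rcases h'.middle_cases with ⟨-, hconst'⟩ | ⟨hp', hword'⟩
    · exact h.right_start_ne (hconst'.apply_eq hle (by omega))
    · rcases hle.lt_or_eq with hinside | rfl
      · exact hp' (hconst.apply_eq hlt.le hinside)
      · exact h.right_ne hword'
  · exact hp (h'.left.apply_eq (by omega) (by omega))

/-- Distinct occurrences may overlap, but never in the middle block of one of them. -/
lemma OccursAt.eq_of_mem_middle {x : ℤ → A} {p p' m : ℤ} (h : M.OccursAt x p)
    (h' : M.OccursAt x p') (h₁ : p ≤ m) (h₂ : m < p + M.length) (h₁' : p' - M.length ≤ m)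
    (h₂' : m < p' + 2 * M.length) : p = p' := by
  rcases lt_trichotomy p p' with hlt | heq | hlt
  · have := h.add_two_mul_length_le h' hlt
    omega
  · exact heq
  · have := h'.add_two_mul_length_le h hlt
    omega

lemma swap_middle {x : ℤ → A} {p m : ℤ} (h : M.OccursAt x p) (h₁ : p ≤ m)
    (h₂ : m < p + M.length) [Decidable (x p = M.letter)] :
    M.swap x m = if x p = M.letter then M.word (m - p).toNat else M.letter := by
  have hex : ∃ p, M.OccursAt x p ∧ p ≤ m ∧ m < p + M.length := ⟨p, h, h₁, h₂⟩
  obtain ⟨hocc, hle, hlt⟩ := hex.choose_spec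
  have hchoose : hex.choose = p := hocc.eq_of_mem_middle h hle hlt (by omega) (by omega)
  rw [swap, dif_pos hex, hchoose]
  congr

lemma swap_of_forall_notMem_middle {x : ℤ → A} {m : ℤ}
    (h : ∀ p, M.OccursAt x p → p ≤ m → ¬ m < p + M.length) : M.swap x m = x m := by
  rw [swap, dif_neg]
  rintro ⟨p, hocc, hle, hlt⟩
  exact h p hocc hle hlt

lemma swap_side {x : ℤ → A} {p m : ℤ} (h : M.OccursAt x p) (h₁ : p - M.length ≤ m)
    (h₂ : m < p + 2 * M.length) (hm : m < p ∨ p + M.length ≤ m) : M.swap x m = x m := by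
  refine swap_of_forall_notMem_middle fun p' h' hle hlt => ?_
  have := h'.eq_of_mem_middle h hle hlt h₁ h₂
  omega

lemma OccursAt.swap_hasWordAt_word {x : ℤ → A} {p : ℤ} (h : M.OccursAt x p)
    (hp : x p = M.letter) : HasWordAt M.word M.length (M.swap x) p := by
  classical
  intro i hi
  rw [swap_middle h (by omega) (by omega), if_pos hp, add_sub_cancel_left, Int.toNat_natCast]

lemma OccursAt.swap_hasWordAt_letter {x : ℤ → A} {p : ℤ} (h : M.OccursAt x p)
    (hp : x p ≠ M.letter) : HasWordAt (fun _ => M.letter) M.length (M.swap x) p := by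
  classical
  intro i hi
  rw [swap_middle h (by omega) (by omega), if_neg hp]

lemma OccursAt.swap {x : ℤ → A} {p : ℤ} (h : M.OccursAt x p) : M.OccursAt (M.swap x) p where
  left := h.left.congr fun i hi => (swap_side h (by omega) (by omega) (Or.inl (by omega))).symm
  middle := by
    by_cases hp : x p = M.letter
    · exact Or.inr (h.swap_hasWordAt_word hp)
    · exact Or.inl (h.swap_hasWordAt_letter hp)
  right_start_ne := by
    have hk := h.length_pos
    rw [swap_side h (by omega) (by omega) (Or.inr le_rfl)]
    exact h.right_start_ne
  right_ne hword := h.right_ne <|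
    hword.congr fun i hi => swap_side h (by omega) (by omega) (Or.inr (by omega))

lemma OccursAt.congr_translate {x y : ℤ → A} {p d : ℤ}
    (hxy : ∀ j, p - M.length ≤ j → j < p + 2 * M.length → x j = y (j + d))
    (h : M.OccursAt x p) : M.OccursAt y (p + d) := by
  have hk := h.length_pos
  have hblock : ∀ q, p - M.length ≤ q → q ≤ p + M.length → ∀ i < M.length,
      x (q + (i : ℤ)) = y (q + d + (i : ℤ)) := fun q h₁ h₂ i hi => by
    rw [hxy _ (by omega) (by omega), add_right_comm]
  constructor
  · rw [add_sub_right_comm]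
    exact h.left.congr (hblock _ le_rfl (by omega))
  · exact h.middle.imp (.congr (hblock p (by omega) (by omega)))
      (.congr (hblock p (by omega) (by omega)))
  · rw [add_right_comm, ← hxy _ (by omega) (by omega)]
    exact h.right_start_ne
  · rw [add_right_comm]
    exact fun hword => h.right_ne <|
      hword.congr fun i hi => (hblock _ (by omega) le_rfl i hi).symm

lemma OccursAt.congr {x y : ℤ → A} {p : ℤ}
    (hxy : ∀ j, p - M.length ≤ j → j < p + 2 * M.length → x j = y j) (h : M.OccursAt x p) :
    M.OccursAt y p := by
  simpa only [add_zero] using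
    h.congr_translate (d := 0) (y := y) fun j h₁ h₂ => by rw [add_zero, hxy j h₁ h₂]

/-- The exchange creates no occurrence: a new one would meet the middle block of an old one, which
is still an occurrence after the exchange. -/
lemma occursAt_swap_iff {x : ℤ → A} {p : ℤ} : M.OccursAt (M.swap x) p ↔ M.OccursAt x p := by
  refine ⟨fun h => ?_, OccursAt.swap⟩
  by_contra hnew
  refine hnew (h.congr fun j h₁ h₂ => ?_)
  refine swap_of_forall_notMem_middle fun p' hold hle hlt => hnew ?_
  rwa [← hold.swap.eq_of_mem_middle h hle hlt h₁ h₂]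

lemma swap_swap (x : ℤ → A) : M.swap (M.swap x) = x := by
  funext m
  by_cases hex : ∃ p, M.OccursAt x p ∧ p ≤ m ∧ m < p + M.length
  · obtain ⟨p, h, h₁, h₂⟩ := hex
    have hpp : p < p + M.length := h₁.trans_lt h₂
    rcases h.middle_cases with ⟨hp, hconst⟩ | ⟨hp, hword⟩
    · have hp' : M.swap x p ≠ M.letter := by
        rw [(h.swap_hasWordAt_word hp).apply_eq le_rfl hpp, sub_self]
        exact M.word_zero_ne
      rw [(h.swap.swap_hasWordAt_letter hp').apply_eq h₁ h₂, hconst.apply_eq h₁ h₂]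
    · have hp' : M.swap x p = M.letter := (h.swap_hasWordAt_letter hp).apply_eq le_rfl hpp
      rw [(h.swap.swap_hasWordAt_word hp').apply_eq h₁ h₂, hword.apply_eq h₁ h₂]
  · have hoff : ∀ p, M.OccursAt x p → p ≤ m → ¬ m < p + M.length :=
      fun p h hle hlt => hex ⟨p, h, hle, hlt⟩
    rw [swap_of_forall_notMem_middle fun p h => hoff p (occursAt_swap_iff.1 h),
      swap_of_forall_notMem_middle hoff]

/-- Locality and shift-equivariance in one statement. -/
lemma swap_congr_translate {x y : ℤ → A} {m d : ℤ}
    (hxy : ∀ j ∈ Set.Icc (m - 2 * M.length) (m + 2 * M.length), x j = y (j + d)) :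
    M.swap x m = M.swap y (m + d) := by
  classical
  by_cases hex : ∃ p, M.OccursAt x p ∧ p ≤ m ∧ m < p + M.length
  · obtain ⟨p, h, h₁, h₂⟩ := hex
    have h' : M.OccursAt y (p + d) :=
      h.congr_translate fun j hj₁ hj₂ => hxy j ⟨by omega, by omega⟩
    rw [swap_middle h h₁ h₂, swap_middle h' (by omega) (by omega),
      hxy p ⟨by omega, by omega⟩, add_sub_add_right_eq_sub]
  · rw [swap_of_forall_notMem_middle fun p h hle hlt => hex ⟨p, h, hle, hlt⟩,
      swap_of_forall_notMem_middle, hxy m ⟨by omega, by omega⟩]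
    intro p h hle hlt
    refine hex ⟨p + -d, h.congr_translate fun j hj₁ hj₂ => ?_, by omega, by omega⟩
    rw [hxy (j + -d) ⟨by omega, by omega⟩, neg_add_cancel_right]

lemma swap_eq_of_forall_le_eq {b : A} {y : ℤ → A} {L : ℤ} (hy : ∀ m ≤ L, y m = b) {m : ℤ}
    (hm : m ≤ L - M.length) : M.swap y m = b := by
  rw [swap_of_forall_notMem_middle, hy m (by omega)]
  intro p h hle hlt
  have hb : b = M.letter := (hy (p - 1) (by omega)).symm.trans
    (h.left.apply_eq (by omega) (by omega))
  exact h.right_start_ne ((hy _ (by omega)).trans hb)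

end Marker

section Discrete

variable {A : Type*} [TopologicalSpace A] [DiscreteTopology A]

lemma eventually_eqOn_of_continuous {X ι : Type*} [TopologicalSpace X] {f : X → ι → A}
    (hf : Continuous f) {F : Set ι} (hF : F.Finite) (x₀ : X) :
    ∀ᶠ x in nhds x₀, Set.EqOn (f x) (f x₀) F :=
  hF.eventually_all.2 fun j _ =>
    ((IsLocallyConstant.iff_continuous _).2 ((continuous_apply j).comp hf)).eventually_eq x₀

lemma exists_cylinder_subset_of_mem_nhds {x : ℕ → A} {U : Set (ℕ → A)} (hU : U ∈ nhds x) :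
    ∃ n, PiNat.cylinder x n ⊆ U := by
  obtain ⟨_, ⟨y, n, rfl⟩, hxy, hsub⟩ :=
    (PiNat.isTopologicalBasis_cylinders fun _ : ℕ => A).mem_nhds_iff.1 hU
  exact ⟨n, PiNat.mem_cylinder_iff_eq.1 hxy ▸ hsub⟩

lemma exists_pi_cylinder_subset_of_mem_nhds {ι : Type*} {z : ι → ℕ → A} {U : Set (ι → ℕ → A)}
    (hU : U ∈ nhds z) :
    ∃ (F : Finset ι) (n : ℕ), (F : Set ι).pi (fun b => PiNat.cylinder (z b) n) ⊆ U := by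
  rw [nhds_pi, mem_pi'] at hU
  obtain ⟨F, t, ht, hsub⟩ := hU
  choose n hn using fun b => exists_cylinder_subset_of_mem_nhds (ht b)
  refine ⟨F, F.sup n, fun w hw => hsub fun b hb => hn b ?_⟩
  exact PiNat.cylinder_anti _ (Finset.le_sup hb) (hw b hb)

namespace Marker

variable (M : Marker A)

lemma continuous_swap : Continuous M.swap := by
  refine continuous_pi fun m => ((IsLocallyConstant.iff_eventually_eq _).2 fun x => ?_).continuous
  filter_upwards [eventually_eqOn_of_continuous continuous_id
    (Set.finite_Icc (m - 2 * M.length) (m + 2 * M.length)) x] with y hy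
  simpa only [add_zero] using
    swap_congr_translate (M := M) (d := 0) (y := x) fun j hj => by rw [add_zero]; exact hy hj

/-- The marker automorphism of `A^ℤ` exchanging `aᵏ` and `s` in the pattern `aᵏ · w · c`. -/
noncomputable def swapHomeo : (ℤ → A) ≃ₜ (ℤ → A) where
  toFun := M.swap
  invFun := M.swap
  left_inv := swap_swap
  right_inv := swap_swap
  continuous_toFun := M.continuous_swap
  continuous_invFun := M.continuous_swap

end Marker

end Discrete

section Prefixes

variable {A : Type*}

/-- The letter `b` fills `y` up to position `L`, and position `L + 1` carries another letter. -/
def IsPrefixEnd (b : A) (y : ℤ → A) (L : ℤ) : Prop := (∀ m ≤ L, y m = b) ∧ y (L + 1) ≠ b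

lemma IsPrefixEnd.ellVal_eq {b : A} {y : ℤ → A} {L : ℤ} (h : IsPrefixEnd b y L) :
    ellVal A y = L := by
  refine IsLeast.csInf_eq ⟨fun heq => h.2 (heq ▸ h.1 L le_rfl), fun m hm => ?_⟩
  by_contra! hmL
  exact hm ((h.1 m hmL.le).trans (h.1 (m + 1) hmL).symm)

lemma exists_isPrefixEnd {b : A} {y : ℤ → A} {L : ℤ} (hy : ∀ m ≤ L, y m = b)
    (hne : ∃ m, y m ≠ b) : ∃ L', IsPrefixEnd b y L' := by
  obtain ⟨m, hm, hmin⟩ := Int.exists_least_of_bdd (P := fun m => y m ≠ b)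
    ⟨L, fun m hm => (not_le.1 fun hmL => hm (hy m hmL)).le⟩ hne
  refine ⟨m - 1, fun j hj => ?_, by rwa [sub_add_cancel]⟩
  by_contra hjb
  have := hmin j hjb
  omega

lemma phiMap_natCast (x : ℕ → A) (n : ℕ) : phiMap A x n = x n := by
  rcases n with _ | n
  · simp [phiMap]
  · rw [phiMap, if_neg (by omega), Int.toNat_natCast]

lemma isPrefixEnd_phiMap {b : A} {x : ℕ → A} (hx : x ∈ OmegaA A b) :
    IsPrefixEnd b (phiMap A x) 0 := by
  refine ⟨fun m hm => (if_pos hm).trans hx.1, ?_⟩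
  have h1 : phiMap A x (0 + 1) = x 1 := phiMap_natCast x 1
  rw [h1, ← hx.1]
  exact hx.2.symm

/-- The map `g` keeps constant left tails, shortening them by at most a uniform amount. -/
def PreservesPrefixes (g : (ℤ → A) → ℤ → A) : Prop :=
  ∃ R : ℕ, ∀ (b : A) (y : ℤ → A) (L : ℤ), (∀ m ≤ L, y m = b) → ∀ m ≤ L - R, g y m = b

lemma PreservesPrefixes.map_const {g : (ℤ → A) → ℤ → A} (h : PreservesPrefixes g) (b : A) :
    g (fun _ => b) = fun _ => b := by
  obtain ⟨R, hR⟩ := h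
  exact funext fun m => hR b _ (m + R) (fun _ _ => rfl) m (by omega)

lemma preservesPrefixes_id : PreservesPrefixes (id : (ℤ → A) → ℤ → A) :=
  ⟨0, fun _ _ _ hy m hm => hy m (by omega)⟩

lemma PreservesPrefixes.comp {f g : (ℤ → A) → ℤ → A} (hf : PreservesPrefixes f)
    (hg : PreservesPrefixes g) : PreservesPrefixes (f ∘ g) := by
  obtain ⟨R, hR⟩ := hf
  obtain ⟨S, hS⟩ := hg
  exact ⟨R + S, fun b y L hy m hm => hR b _ (L - S) (hS b y L hy) m (by omega)⟩

variable [TopologicalSpace A]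

lemma continuous_phiMap : Continuous (phiMap A) := by
  refine continuous_pi fun m => ?_
  unfold phiMap
  split_ifs
  · exact continuous_apply 0
  · exact continuous_apply _

variable (A) in
/-- The automorphisms that, together with their inverses, preserve constant left tails. They all
belong to `Gstar A`, and they compose well with the action on `Ω`. -/
def prefixAut : Subgroup ((ℤ → A) ≃ₜ (ℤ → A)) where
  carrier := {g | g ∈ ShiftAut A ∧ PreservesPrefixes g ∧ PreservesPrefixes g.symm}
  mul_mem' hg hh := ⟨mul_mem hg.1 hh.1, hg.2.1.comp hh.2.1, hh.2.2.comp hg.2.2⟩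
  one_mem' := ⟨one_mem _, preservesPrefixes_id, preservesPrefixes_id⟩
  inv_mem' hg := ⟨inv_mem hg.1, hg.2.2, hg.2.1⟩

lemma shiftHomeo_zpow_apply (d : ℤ) (y : ℤ → A) :
    (shiftHomeo A ^ d) y = fun m => y (m + d) := by
  induction d using Int.induction_on generalizing y with
  | zero => simp only [zpow_zero, add_zero]; rfl
  | succ n ih =>
    rw [zpow_add_one]
    refine (ih (shiftHomeo A y)).trans (funext fun m => congrArg y ?_)
    ring
  | pred n ih =>
    rw [zpow_sub_one]
    refine (ih ((shiftHomeo A)⁻¹ y)).trans (funext fun m => congrArg y ?_)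
    ring

lemma apply_translate_of_mem_shiftAut {g : (ℤ → A) ≃ₜ (ℤ → A)} (hg : g ∈ ShiftAut A) (y : ℤ → A)
    (d : ℤ) : g (fun m => y (m + d)) = fun m => g y (m + d) := by
  have hcomm : Commute g (shiftHomeo A ^ d) :=
    Commute.zpow_right (Subgroup.mem_centralizer_singleton_iff.1 hg) d
  rw [← shiftHomeo_zpow_apply, ← shiftHomeo_zpow_apply]
  exact DFunLike.congr_fun hcomm.eq y

lemma exists_isPrefixEnd_apply {g : (ℤ → A) ≃ₜ (ℤ → A)} (hg : g ∈ prefixAut A) {b : A}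
    {y : ℤ → A} {L : ℤ} (hy : IsPrefixEnd b y L) : ∃ L', IsPrefixEnd b (g y) L' := by
  obtain ⟨-, ⟨R, hR⟩, hsymm⟩ := hg
  refine exists_isPrefixEnd (hR b y L hy.1) ?_
  by_contra! hconst
  have hy' : y = fun _ => b := by
    rw [← hsymm.map_const b, ← funext hconst, g.symm_apply_apply]
  exact hy.2 (congrFun hy' _)

section Action

variable {g h : (ℤ → A) ≃ₜ (ℤ → A)} {b : A} {x y : ℕ → A} {L : ℤ}

lemma omegaAct_apply (hL : IsPrefixEnd b (g (phiMap A x)) L) (n : ℕ) :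
    omegaAct A g x n = g (phiMap A x) (L + n) := by
  rw [omegaAct, hL.ellVal_eq]

lemma omegaAct_mem_omegaA_of_isPrefixEnd (hL : IsPrefixEnd b (g (phiMap A x)) L) :
    omegaAct A g x ∈ OmegaA A b := by
  have h0 : omegaAct A g x 0 = b := (omegaAct_apply hL 0).trans (hL.1 _ (by simp))
  refine ⟨h0, ?_⟩
  rw [h0, omegaAct_apply hL 1]
  exact hL.2.symm

lemma phiMap_omegaAct (hL : IsPrefixEnd b (g (phiMap A x)) L) :
    phiMap A (omegaAct A g x) = fun m => g (phiMap A x) (m + L) := by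
  funext m
  rcases le_total m 0 with hm | hm
  · rw [phiMap, if_pos hm, (omegaAct_mem_omegaA_of_isPrefixEnd hL).1, hL.1 _ (by omega)]
  · lift m to ℕ using hm
    rw [phiMap_natCast, omegaAct_apply hL, add_comm]

lemma omegaAct_mem_omegaA (hg : g ∈ prefixAut A) (hx : x ∈ OmegaA A b) :
    omegaAct A g x ∈ OmegaA A b :=
  have ⟨_, hL⟩ := exists_isPrefixEnd_apply hg (isPrefixEnd_phiMap hx)
  omegaAct_mem_omegaA_of_isPrefixEnd hL

lemma omegaAct_eq_of_phiMap_eq (hy : y ∈ OmegaA A b)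
    (hxy : phiMap A y = fun m => g (phiMap A x) (m + L)) : omegaAct A g x = y := by
  have hL : IsPrefixEnd b (g (phiMap A x)) L := by
    have hphi := isPrefixEnd_phiMap hy
    rw [hxy] at hphi
    refine ⟨fun m hm => ?_, by simpa only [zero_add, add_comm] using hphi.2⟩
    simpa only [sub_add_cancel] using hphi.1 (m - L) (by omega)
  funext n
  rw [omegaAct_apply hL, ← phiMap_natCast y n, hxy, add_comm]

lemma omegaAct_one (hx : x ∈ OmegaA A b) : omegaAct A 1 x = x :=
  omegaAct_eq_of_phiMap_eq (L := 0) hx (funext fun m => by rw [add_zero]; rfl)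

lemma omegaAct_mul (hg : g ∈ prefixAut A) (hh : h ∈ prefixAut A) (hx : x ∈ OmegaA A b) :
    omegaAct A (g * h) x = omegaAct A g (omegaAct A h x) := by
  have hhx := omegaAct_mem_omegaA hh hx
  obtain ⟨L, hL⟩ := exists_isPrefixEnd_apply hh (isPrefixEnd_phiMap hx)
  obtain ⟨M, hM⟩ := exists_isPrefixEnd_apply hg (isPrefixEnd_phiMap hhx)
  refine omegaAct_eq_of_phiMap_eq (L := M + L) (omegaAct_mem_omegaA hg hhx) ?_
  rw [phiMap_omegaAct hM, phiMap_omegaAct hL, apply_translate_of_mem_shiftAut hg.1]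
  exact funext fun m => congrArg _ (add_assoc m M L)

lemma prefixAut_subset_Gstar : (prefixAut A : Set ((ℤ → A) ≃ₜ (ℤ → A))) ⊆ Gstar A := by
  refine fun g hg => ⟨hg.1, fun b => Set.Subset.antisymm ?_ fun x hx => ?_⟩
  · rintro _ ⟨x, hx, rfl⟩
    exact omegaAct_mem_omegaA hg hx
  · refine ⟨omegaAct A g⁻¹ x, omegaAct_mem_omegaA (inv_mem hg) hx, ?_⟩
    rw [← omegaAct_mul hg (inv_mem hg) hx, mul_inv_cancel, omegaAct_one hx]

end Action

end Prefixes

section Continuity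

variable {A : Type*} [TopologicalSpace A] [DiscreteTopology A] {g : (ℤ → A) ≃ₜ (ℤ → A)}

/-- Tails are shortened by a uniform amount, so the end of the tail of `g (φ x)` can be read off
finitely many coordinates. -/
lemma eventually_isPrefixEnd_apply_phiMap (hg : PreservesPrefixes g) {b : A} {x₀ : ℕ → A} {L : ℤ}
    (hL : IsPrefixEnd b (g (phiMap A x₀)) L) :
    ∀ᶠ x in nhdsWithin x₀ (OmegaA A b), IsPrefixEnd b (g (phiMap A x)) L := by
  obtain ⟨R, hR⟩ := hg
  have hwindow := eventually_eqOn_of_continuous (g.continuous.comp continuous_phiMap)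
    (Set.finite_Icc (min (-(R : ℤ)) L) (L + 1)) x₀
  filter_upwards [mem_nhdsWithin_of_mem_nhds hwindow, self_mem_nhdsWithin] with x hx hxb
  refine ⟨fun m hm => ?_, ?_⟩
  · by_cases hmR : m ≤ 0 - R
    · exact hR b _ 0 (isPrefixEnd_phiMap hxb).1 m hmR
    · exact (hx ⟨by omega, by omega⟩).trans (hL.1 m hm)
  · exact (hx ⟨by omega, le_rfl⟩).trans_ne hL.2

lemma continuousOn_omegaAct (hg : g ∈ prefixAut A) (b : A) :
    ContinuousOn (omegaAct A g) (OmegaA A b) := by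
  refine fun x₀ hx₀ => tendsto_pi_nhds.2 fun i => ?_
  obtain ⟨L, hL⟩ := exists_isPrefixEnd_apply hg (isPrefixEnd_phiMap hx₀)
  rw [nhds_discrete A, tendsto_pure]
  have hcoord := eventually_eqOn_of_continuous (g.continuous.comp continuous_phiMap)
    (Set.finite_singleton (L + i)) x₀
  filter_upwards [mem_nhdsWithin_of_mem_nhds hcoord,
    eventually_isPrefixEnd_apply_phiMap hg.2.1 hL] with x hx hxL
  rw [omegaAct_apply hxL, omegaAct_apply hL]
  exact hx rfl

lemma continuous_omegaAct_coord (hg : g ∈ prefixAut A) (b : A) :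
    Continuous fun w : ProdOmega A => omegaAct A g (w.1 b) :=
  (continuousOn_omegaAct hg b).comp_continuous
    ((continuous_apply b).comp continuous_subtype_val) fun w => w.2 b

lemma continuous_diagAct (hg : g ∈ prefixAut A) :
    Continuous (diagAct A g (prefixAut_subset_Gstar hg)) :=
  (continuous_pi fun b => continuous_omegaAct_coord hg b).subtype_mk _

end Continuity

namespace Marker

variable {A : Type*}

/-- The one-sided configurations in which the word of `M` occurs at position `1`. -/
def cylinder (M : Marker A) : Set (ℕ → A) := {x | ∀ i < M.length, x (i + 1) = M.word i}

lemma occursAt_phiMap {M : Marker A} {x : ℕ → A} (hx : x ∈ OmegaA A M.letter)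
    (hxM : x ∉ M.cylinder) : M.OccursAt (phiMap A x) (1 - M.length) := by
  obtain ⟨hconst, hne⟩ := isPrefixEnd_phiMap hx
  refine ⟨fun i _ => hconst _ (by omega), Or.inl fun i _ => hconst _ (by omega), ?_,
    fun hword => hxM fun i hi => ?_⟩
  · rwa [sub_add_cancel, ← zero_add (1 : ℤ)]
  · rw [← phiMap_natCast x, ← hword i hi, sub_add_cancel, Nat.cast_add_one, add_comm]

section Discrete

variable [TopologicalSpace A] [DiscreteTopology A] (M : Marker A)

lemma swapHomeo_mem_prefixAut : M.swapHomeo ∈ prefixAut A := by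
  have hpres : PreservesPrefixes M.swap :=
    ⟨M.length, fun _ _ _ hy _ hm => swap_eq_of_forall_le_eq hy hm⟩
  refine ⟨Subgroup.mem_centralizer_singleton_iff.2 ?_, hpres, hpres⟩
  exact Homeomorph.ext fun x => funext fun m => (swap_congr_translate fun j _ => rfl)

lemma isClosed_cylinder : IsClosed M.cylinder := by
  simp only [cylinder, Set.ofPred_forall]
  exact isClosed_iInter fun i => isClosed_iInter fun _ =>
    isClosed_eq (continuous_apply _) continuous_const

variable {M} {x : ℕ → A}

/-- The tail of `φ x` consists of copies of a letter other than that of `M`, so every occurrence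
starts after it. -/
lemma omegaAct_swapHomeo_of_ne {b : A} (hb : b ≠ M.letter) (hx : x ∈ OmegaA A b) {i : ℕ}
    (hi : i ≤ M.length) : omegaAct A M.swapHomeo x i = x i := by
  have hphi := isPrefixEnd_phiMap hx
  have hfix : ∀ m ≤ max (M.length : ℤ) 1, M.swap (phiMap A x) m = phiMap A x m := fun m hm => by
    refine swap_of_forall_notMem_middle fun p hp hle hlt => hb ?_
    have hk := hp.length_pos
    exact (hphi.1 (p - M.length) (by omega)).symm.trans (hp.left.apply_eq le_rfl (by omega))
  have hL : IsPrefixEnd b (M.swapHomeo (phiMap A x)) 0 :=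
    ⟨fun m hm => (hfix m (by omega)).trans (hphi.1 m hm), (hfix 1 (by omega)).trans_ne hphi.2⟩
  rw [omegaAct_apply hL, zero_add, ← phiMap_natCast x]
  exact hfix i (by omega)

lemma omegaAct_swapHomeo_of_notMem_cylinder (hx : x ∈ OmegaA A M.letter) (hxM : x ∉ M.cylinder) :
    omegaAct A M.swapHomeo x ∈ M.cylinder := by
  have hphi := isPrefixEnd_phiMap hx
  have hocc := occursAt_phiMap hx hxM
  have hk := hocc.length_pos
  have hword : HasWordAt M.word M.length (M.swapHomeo (phiMap A x)) (1 - M.length) :=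
    hocc.swap_hasWordAt_word (hphi.1 _ (by omega))
  have hL : IsPrefixEnd M.letter (M.swapHomeo (phiMap A x)) (-(M.length : ℤ)) := by
    refine ⟨fun m hm => swap_eq_of_forall_le_eq hphi.1 (by omega), ?_⟩
    rw [hword.apply_eq (by omega) (by omega), neg_add_eq_sub, sub_self]
    exact M.word_zero_ne
  intro i hi
  rw [omegaAct_apply hL, ← hword i hi, Nat.cast_add_one]
  exact congrArg _ (by ring)

end Discrete

end Marker

/-- Borel–Cantelli along a countable neighbourhood basis yields almost everywhere convergence. -/
lemma exists_seq_tendsto_integral_comp {X : Type*} [TopologicalSpace X] [MeasurableSpace X]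
    [OpensMeasurableSpace X] (μ : Measure X) [IsProbabilityMeasure μ] {z : X}
    [(nhds z).IsCountablyGenerated] {ι : Type*} {T : ι → X → X} (hT : ∀ i, Measurable (T i))
    (hsmall : ∀ U ∈ nhds z, ∀ ε : ENNReal, ε ≠ 0 → ∃ i, μ {w | T i w ∉ U} ≤ ε) :
    ∃ i : ℕ → ι, ∀ f : BoundedContinuousFunction X ℝ,
      Tendsto (fun k => ∫ w, f (T (i k) w) ∂μ) atTop (nhds (f z)) := by
  obtain ⟨U, hU⟩ := (nhds z).exists_antitone_basis
  obtain ⟨ε, hε, hsum⟩ := ENNReal.exists_pos_sum_of_countable' (ε := 1) one_ne_zero ℕ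
  choose i hi using fun k => hsmall (U k) (hU.mem k) (ε k) (hε k).ne'
  have hae : ∀ᵐ w ∂μ, Tendsto (fun k => T (i k) w) atTop (nhds z) := by
    have hfinite : ∑' k, μ {w | T (i k) w ∉ U k} ≠ ⊤ :=
      ((ENNReal.tsum_le_tsum hi).trans_lt (hsum.trans ENNReal.one_lt_top)).ne
    filter_upwards [ae_eventually_notMem hfinite] with w hw
    refine hU.tendsto_right_iff.2 fun n _ => ?_
    filter_upwards [hw, eventually_ge_atTop n] with k hk hnk
    exact hU.antitone hnk (not_not.1 hk)
  refine ⟨i, fun f => ?_⟩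
  have hlim := tendsto_integral_of_dominated_convergence (μ := μ)
    (F := fun k w => f (T (i k) w)) (f := fun _ => f z) (fun _ => ‖f‖)
    (fun k => (f.continuous.measurable.comp (hT (i k))).aestronglyMeasurable)
    (integrable_const _) (fun _ => Eventually.of_forall fun _ => f.norm_coe_le_norm _)
    (hae.mono fun w hw => (f.continuous.tendsto z).comp hw)
  simpa only [integral_const, probReal_univ, one_smul] using hlim

lemma exists_measure_lt_of_pairwise_disjoint {X : Type*} [MeasurableSpace X] (μ : Measure X)
    [IsFiniteMeasure μ] {ι : Type*} [Infinite ι] {S : ι → Set X} (hS : ∀ i, MeasurableSet (S i))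
    (hdisj : Pairwise (Function.onFun Disjoint S)) {ε : ENNReal} (hε : ε ≠ 0) :
    ∃ i, μ (S i) < ε := by
  obtain ⟨i, hi⟩ := (Measure.finite_const_le_meas_of_disjoint_iUnion μ (pos_iff_ne_zero.2 hε) hS
    hdisj (measure_ne_top _ _)).exists_notMem
  exact ⟨i, not_le.1 hi⟩

section Contraction

variable {A : Type*} {a : A} {x : ℕ → A}

/-- The marker with word `x₁ … xₙ₊₁ aʲ x₁`. For fixed `x` and `n` these words are pairwise
incompatible, and all of them begin like `x`. -/
def prefixMarker (hx : x ∈ OmegaA A a) (n j : ℕ) : Marker A where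
  letter := a
  word i := if i ≤ n then x (i + 1) else if i = n + 1 + j then x 1 else a
  length := n + 1 + j + 1
  word_zero_ne := by simpa [hx.1] using hx.2.symm

lemma disjoint_cylinder_prefixMarker_of_lt (hx : x ∈ OmegaA A a) (n : ℕ) {j j' : ℕ}
    (hjj' : j < j') :
    Disjoint (prefixMarker hx n j).cylinder (prefixMarker hx n j').cylinder := by
  refine Set.disjoint_left.2 fun y hy hy' => (prefixMarker hx n j).word_zero_ne ?_
  have hend : y (n + 1 + j + 1) = x 1 := by
    rw [hy (n + 1 + j) (Nat.lt_succ_self _)]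
    exact (if_neg (by omega)).trans (if_pos rfl)
  have hend' : y (n + 1 + j + 1) = a := by
    rw [hy' (n + 1 + j) (by simp only [prefixMarker]; omega)]
    exact (if_neg (by omega)).trans (if_neg (by omega))
  exact hend.symm.trans hend'

lemma pairwise_disjoint_cylinder_prefixMarker (hx : x ∈ OmegaA A a) (n : ℕ) :
    Pairwise (Function.onFun Disjoint fun j => (prefixMarker hx n j).cylinder) := fun _ _ hne =>
  hne.lt_or_gt.elim (disjoint_cylinder_prefixMarker_of_lt hx n) fun hlt =>
    (disjoint_cylinder_prefixMarker_of_lt hx n hlt).symm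

variable [TopologicalSpace A] [DiscreteTopology A]

lemma omegaAct_prefixMarker_mem_cylinder (hx : x ∈ OmegaA A a) {n j : ℕ} {y : ℕ → A}
    (hy : y ∈ OmegaA A a) (hyM : y ∉ (prefixMarker hx n j).cylinder) :
    omegaAct A (prefixMarker hx n j).swapHomeo y ∈ PiNat.cylinder x n := by
  intro i hi
  rcases i with _ | i
  · rw [(omegaAct_mem_omegaA (Marker.swapHomeo_mem_prefixAut _) hy).1, hx.1]
  · rw [Marker.omegaAct_swapHomeo_of_notMem_cylinder hy hyM i
      (by simp only [prefixMarker]; omega)]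
    exact if_pos (by omega)

lemma omegaAct_prefixMarker_mem_cylinder_of_ne (hx : x ∈ OmegaA A a) {n j : ℕ} {b : A}
    (hb : b ≠ a) {y z : ℕ → A} (hy : y ∈ OmegaA A b) (hyz : y ∈ PiNat.cylinder z n) :
    omegaAct A (prefixMarker hx n j).swapHomeo y ∈ PiNat.cylinder z n := fun i hi =>
  (Marker.omegaAct_swapHomeo_of_ne hb hy (by simp only [prefixMarker]; omega)).trans (hyz i hi)

variable [MeasurableSpace (ProdOmega A)] [BorelSpace (ProdOmega A)]

/-- The letters are treated one at a time; treating a new one does not spoil the others. -/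
lemma exists_mem_prefixAut_measure_le (μ : Measure (ProdOmega A)) [IsFiniteMeasure μ]
    (z : ProdOmega A) (n : ℕ) (F : Finset A) {ε : ENNReal} (hε : ε ≠ 0) :
    ∃ g ∈ prefixAut A, μ {w | ¬ ∀ b ∈ F, omegaAct A g (w.1 b) ∈ PiNat.cylinder (z.1 b) n} ≤ ε := by
  classical
  induction F using Finset.induction_on generalizing ε with
  | empty => exact ⟨1, one_mem _, by simp⟩
  | insert a F _ ih =>
    have hε' : ε / 2 ≠ 0 := (ENNReal.half_pos hε).ne'
    obtain ⟨g, hg, hgμ⟩ := ih hε'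
    let M := prefixMarker (z.2 a) n
    obtain ⟨j, hj⟩ := exists_measure_lt_of_pairwise_disjoint μ
      (S := fun j => {w : ProdOmega A | omegaAct A g (w.1 a) ∈ (M j).cylinder})
      (fun j => ((M j).isClosed_cylinder.preimage (continuous_omegaAct_coord hg a)).measurableSet)
      (fun j j' hne => (pairwise_disjoint_cylinder_prefixMarker (z.2 a) n hne).preimage _) hε'
    have hM := (M j).swapHomeo_mem_prefixAut
    refine ⟨(M j).swapHomeo * g, mul_mem hM hg, ?_⟩
    rw [← ENNReal.add_halves ε]
    refine (measure_mono fun w hw => ?_).trans <|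
      (measure_union_le _ _).trans (add_le_add hgμ hj.le)
    by_contra hgood
    obtain ⟨hF, ha⟩ := not_or.1 hgood
    refine hw fun b hb => ?_
    rw [omegaAct_mul hM hg (w.2 b)]
    rcases eq_or_ne b a with rfl | hba
    · exact omegaAct_prefixMarker_mem_cylinder _ (omegaAct_mem_omegaA hg (w.2 b)) ha
    · exact omegaAct_prefixMarker_mem_cylinder_of_ne _ hba (omegaAct_mem_omegaA hg (w.2 b))
        (not_not.1 hF b (Finset.mem_of_mem_insert_of_ne hb hba))

end Contraction

theorem gstar_diag_stronglyProximal_general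
    (A : Type*) [Countable A] [TopologicalSpace A] [DiscreteTopology A]
    [MeasurableSpace (ProdOmega A)] [BorelSpace (ProdOmega A)]
    (μ : Measure (ProdOmega A)) [IsProbabilityMeasure μ] (z : ProdOmega A) :
    ∃ (g : ℕ → (ℤ → A) ≃ₜ (ℤ → A)) (hg : ∀ k, g k ∈ Gstar A),
      ∀ f : BoundedContinuousFunction (ProdOmega A) ℝ,
        Tendsto (fun k => ∫ w, f (diagAct A (g k) (hg k) w) ∂μ) atTop (nhds (f z)) := by
  have : FirstCountableTopology (ProdOmega A) :=
    TopologicalSpace.firstCountableTopology_induced _ (A → ℕ → A) Subtype.val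
  obtain ⟨g, hlim⟩ := exists_seq_tendsto_integral_comp μ (z := z)
    (T := fun g : prefixAut A => diagAct A g (prefixAut_subset_Gstar g.2))
    (fun g => (continuous_diagAct g.2).measurable) fun U hU ε hε => by
      obtain ⟨V, hV, hVU⟩ := mem_nhds_subtype _ _ _ |>.1 hU
      obtain ⟨F, n, hFn⟩ := exists_pi_cylinder_subset_of_mem_nhds hV
      obtain ⟨g, hg, hμ⟩ := exists_mem_prefixAut_measure_le μ z n F hε
      exact ⟨⟨g, hg⟩, le_trans (measure_mono fun w hw hF => hw (hVU (hFn hF))) hμ⟩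
  exact ⟨fun k => g k, fun k => prefixAut_subset_Gstar (g k).2, hlim⟩

/-- The diagonal action of `G*` on `∏_{a ∈ A} Ω^a` is strongly proximal:
every Borel probability measure can be pushed by a sequence of elements of `G*`
to converge weak* to a point mass. -/
theorem gstar_diag_stronglyProximal
    (A : Type*) [Fintype A] [TopologicalSpace A] [DiscreteTopology A]
    (hA : 2 ≤ Fintype.card A)
    [MeasurableSpace (ProdOmega A)] [BorelSpace (ProdOmega A)] :
    ∀ μ : Measure (ProdOmega A), IsProbabilityMeasure μ →
      ∃ (g : ℕ → (ℤ → A) ≃ₜ (ℤ → A)) (hg : ∀ k, g k ∈ Gstar A) (z : ProdOmega A),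
        ∀ f : BoundedContinuousFunction (ProdOmega A) ℝ,
          Tendsto (fun k => ∫ w, f (diagAct A (g k) (hg k) w) ∂μ)
            atTop (nhds (f z)) := by
  intro μ _
  obtain ⟨z⟩ : Nonempty (ProdOmega A) := nonempty_of_isProbabilityMeasure μ
  obtain ⟨g, hg, hlim⟩ := gstar_diag_stronglyProximal_general A μ z
  exact ⟨g, hg, z, hlim⟩
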